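/- Let (X,Σ,μ,T) be an ergodic measure-preserving ℤ^d-system. Then (X,μ,T) has discrete spectrum if and only if no f ∈ L²(X,μ) is μ-mean sensitive (equivalently, L²(X,μ) = H_ap = H_ms^c). -/

import Mathlib

open MeasureTheory Filter Finset Metric
open scoped Classical

noncomputable section

/-- The box `{0,…,n−1}^d` inside `ℤ^d`. -/
def Fbox (d n : ℕ) : Finset (Fin d → ℤ) :=
  Fintype.piFinset fun _ => Finset.Icc (0 : ℤ) ((n : ℤ) - 1)

/-- Upper density of a subset of `ℤ^d` along the boxes `F_n`. -/
def upperDensity (d : ℕ) (S : Set (Fin d → ℤ)) : ℝ :=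
  Filter.limsup
    (fun n : ℕ => (((Fbox d n).filter (fun j => j ∈ S)).card : ℝ) / ((Fbox d n).card : ℝ))
    Filter.atTop

/-- Lower density of a subset of `ℤ^d` along the boxes `F_n`. -/
def lowerDensity (d : ℕ) (S : Set (Fin d → ℤ)) : ℝ :=
  Filter.liminf
    (fun n : ℕ => (((Fbox d n).filter (fun j => j ∈ S)).card : ℝ) / ((Fbox d n).card : ℝ))
    Filter.atTop

variable {X : Type*}

/-- The pseudometric `d_f(x,y) = limsup_n ((1/|F_n|) Σ_{j∈F_n} |f(T^j x) − f(T^j y)|²)^{1/2}`. -/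
def dF {d : ℕ} (T : (Fin d → ℤ) → X → X) (f : X → ℂ) (x y : X) : ℝ :=
  Filter.limsup (fun n : ℕ =>
    Real.sqrt ((∑ j ∈ Fbox d n, ‖f (T j x) - f (T j y)‖ ^ 2) / ((Fbox d n).card : ℝ)))
    Filter.atTop

/-- `x` is a generic point for `|f|²`:
the Birkhoff averages of `|f|²` along `x` converge to `∫ |f|² dμ`. -/
def genericSq {d : ℕ} [MeasurableSpace X] (μ : Measure X) (T : (Fin d → ℤ) → X → X)
    (f : X → ℂ) (x : X) : Prop :=
  Filter.Tendsto
    (fun n : ℕ => (∑ j ∈ Fbox d n, ‖f (T j x)‖ ^ 2) / ((Fbox d n).card : ℝ))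
    Filter.atTop (nhds (∫ y, ‖f y‖ ^ 2 ∂μ))

/-- `ε` is a `μ`-sensitivity constant for `f`: every positive measure set contains two
generic points `x, y` with `d_f(x,y) > ε`. -/
def SensitivityConstant {d : ℕ} [MeasurableSpace X] (μ : Measure X)
    (T : (Fin d → ℤ) → X → X) (f : X → ℂ) (ε : ℝ) : Prop :=
  0 < ε ∧ ∀ A : Set X, MeasurableSet A → 0 < μ A →
    ∃ x ∈ A, ∃ y ∈ A, genericSq μ T f x ∧ genericSq μ T f y ∧ ε < dF T f x y

/-- `f` is `μ`-mean sensitive (`f ∈ H_ms`). -/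
def MeanSensitiveFun {d : ℕ} [MeasurableSpace X] (μ : Measure X)
    (T : (Fin d → ℤ) → X → X) (f : X → ℂ) : Prop :=
  ∃ ε : ℝ, SensitivityConstant μ T f ε

/-- `g ∈ L²(X,μ)` is an eigenfunction of the action: `g ≠ 0` and there is `w ∈ ℝ^d` with
`g ∘ T^j = e^{2πi⟨w,j⟩} g` a.e. for all `j`. -/
def IsEigenfunction {d : ℕ} [MeasurableSpace X] (μ : Measure X)
    (T : (Fin d → ℤ) → X → X) (g : Lp ℂ 2 μ) : Prop :=
  g ≠ 0 ∧ ∃ w : Fin d → ℝ, ∀ j : Fin d → ℤ,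
    (g : X → ℂ) ∘ T j =ᵐ[μ]
      fun x => Complex.exp (2 * Real.pi * Complex.I * ∑ k, (w k : ℂ) * (j k : ℂ)) * (g : X → ℂ) x

/-- The system has discrete spectrum: there is an orthonormal (Hilbert) basis of `L²(X,μ)`
consisting of eigenfunctions. -/
def HasDiscreteSpectrum {d : ℕ} [MeasurableSpace X] (μ : Measure X)
    (T : (Fin d → ℤ) → X → X) : Prop :=
  ∃ (ι : Type) (b : HilbertBasis ι ℂ (Lp ℂ 2 μ)), ∀ i : ι, IsEigenfunction μ T (b i)

/-! If a bounded function `f` is not mean sensitive, its orbit under the Koopman operators is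
totally bounded. Otherwise infinitely many `f ∘ T j` are `ε`-separated, and two of the corresponding
preimages of a set of positive measure must meet; the `limsup` of the box averages of
`|f ∘ T i - f ∘ T j|²` is invariant, hence constant, and at least `ε²` by reverse Fatou. A vector
with totally bounded orbit is a limit of sums of joint eigenvectors: averaging the rank-one
operators `⟨U j f, ·⟩ U j f` produces a nonzero compact self-adjoint operator commuting with all
`U k`, and the `U k` have a common eigenvector in each of its eigenspaces for a nonzero eigenvalue.
The unimodular functions `2 · 1_B - 1` and `1` span a dense subspace of `L²`, and by ergodicity the
joint eigenspaces are lines.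

Conversely, two points at which an eigenfunction takes close values have orbits on which it stays
close at all times, so finite sums of eigenfunctions are not sensitive; the remaining small `L²`
tail is controlled on a set of positive measure by Wiener's maximal inequality.
-/

section Boxes

variable {d : ℕ}

lemma card_Fbox (d n : ℕ) : #(Fbox d n) = n ^ d := by
  simp only [Fbox, Fintype.card_piFinset, Int.card_Icc, sub_add_cancel, sub_zero, Int.toNat_natCast,
    prod_const, card_univ, Fintype.card_fin]

lemma card_Fbox_pos {n : ℕ} (hn : n ≠ 0) : 0 < #(Fbox d n) := by
  rw [card_Fbox]; positivity

lemma mem_Fbox {n : ℕ} {j : Fin d → ℤ} : j ∈ Fbox d n ↔ ∀ k, 0 ≤ j k ∧ j k < n := by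
  simp only [Fbox, Fintype.mem_piFinset, Finset.mem_Icc, Int.le_sub_one_iff]

/-- The translate `a + {0, …, n - 1}^d` of a box. -/
def translatedBox (a : Fin d → ℤ) (n : ℕ) : Finset (Fin d → ℤ) :=
  (Fbox d n).map (addRightEmbedding a)

lemma card_translatedBox (a : Fin d → ℤ) (n : ℕ) : #(translatedBox a n) = #(Fbox d n) :=
  card_map _

lemma sum_translatedBox {E : Type*} [AddCommMonoid E] (φ : (Fin d → ℤ) → E) (a : Fin d → ℤ)
    (n : ℕ) : ∑ i ∈ translatedBox a n, φ i = ∑ j ∈ Fbox d n, φ (j + a) :=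
  sum_map _ _ _

lemma mem_translatedBox {a i : Fin d → ℤ} {n : ℕ} :
    i ∈ translatedBox a n ↔ ∀ k, a k ≤ i k ∧ i k < a k + n := by
  simp only [translatedBox, Finset.mem_map, addRightEmbedding_apply]
  constructor
  · rintro ⟨j, hj, rfl⟩ k
    have := mem_Fbox.1 hj k
    simp only [Pi.add_apply]
    omega
  · intro hi
    refine ⟨i - a, mem_Fbox.2 fun k => ?_, sub_add_cancel i a⟩
    have := hi k
    simp only [Pi.sub_apply]
    omega

lemma tendsto_card_Fbox_add_div (d m : ℕ) :
    Tendsto (fun n : ℕ => (#(Fbox d (n + m)) : ℝ) / #(Fbox d n)) atTop (nhds 1) := by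
  have hratio : Tendsto (fun n : ℕ => 1 + (m : ℝ) / n) atTop (nhds 1) := by
    simpa using (tendsto_const_div_atTop_nhds_zero_nat (m : ℝ)).const_add 1
  have hpow := hratio.pow d
  rw [one_pow] at hpow
  refine hpow.congr' ?_
  filter_upwards [eventually_ne_atTop 0] with n hn
  rw [card_Fbox, card_Fbox, one_add_div (Nat.cast_ne_zero.2 hn), div_pow]
  push_cast
  rfl

lemma norm_sum_sub_sum_le {ι E : Type*} [SeminormedAddCommGroup E] {A B O : Finset ι} (hA : A ⊆ O)
    (hB : B ⊆ O) {φ : ι → E} {C : ℝ} (hφ : ∀ j, ‖φ j‖ ≤ C) :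
    ‖∑ j ∈ A, φ j - ∑ j ∈ B, φ j‖ ≤ ((#O - #A) + (#O - #B)) * C := by
  have norm_sum_sdiff_le {S : Finset ι} (hS : S ⊆ O) : ‖∑ j ∈ O \ S, φ j‖ ≤ (#O - #S) * C := by
    refine (norm_sum_le_of_le _ fun j _ => hφ j).trans_eq ?_
    rw [sum_const, card_sdiff_of_subset hS, nsmul_eq_mul, Nat.cast_sub (card_le_card hS)]
  calc ‖∑ j ∈ A, φ j - ∑ j ∈ B, φ j‖
      = ‖∑ j ∈ O \ B, φ j - ∑ j ∈ O \ A, φ j‖ := by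
        congr 1
        rw [sub_eq_sub_iff_add_eq_add, add_comm, sum_sdiff hA, sum_sdiff hB]
    _ ≤ (#O - #B) * C + (#O - #A) * C :=
        (norm_sub_le _ _).trans (add_le_add (norm_sum_sdiff_le hB) (norm_sum_sdiff_le hA))
    _ = ((#O - #A) + (#O - #B)) * C := by ring

section Average

variable {E F : Type*} [NormedAddCommGroup E] [NormedSpace ℝ E]
  [NormedAddCommGroup F] [NormedSpace ℝ F]

/-- The average of `φ` over the box `{0, …, n - 1}^d`, as a linear function of `φ`; it is `0` for an
empty box. -/
def boxAverage (d n : ℕ) : ((Fin d → ℤ) → E) →ₗ[ℝ] E :=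
  (#(Fbox d n) : ℝ)⁻¹ • ∑ j ∈ Fbox d n, LinearMap.proj j

lemma boxAverage_apply (n : ℕ) (φ : (Fin d → ℤ) → E) :
    boxAverage d n φ = (#(Fbox d n) : ℝ)⁻¹ • ∑ j ∈ Fbox d n, φ j := by
  simp only [boxAverage, LinearMap.smul_apply, LinearMap.coe_sum, Finset.sum_apply,
    LinearMap.coe_proj, Function.eval]

lemma boxAverage_eq_div (n : ℕ) (φ : (Fin d → ℤ) → ℝ) :
    boxAverage d n φ = (∑ j ∈ Fbox d n, φ j) / #(Fbox d n) := by
  rw [boxAverage_apply, smul_eq_mul, inv_mul_eq_div]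

lemma boxAverage_const {n : ℕ} (hn : n ≠ 0) (c : E) : boxAverage d n (fun _ => c) = c := by
  rw [boxAverage_apply, sum_const, ← Nat.cast_smul_eq_nsmul ℝ, inv_smul_smul₀]
  exact_mod_cast (card_Fbox_pos hn).ne'

lemma boxAverage_mono (n : ℕ) : Monotone (boxAverage (E := ℝ) d n) := fun φ ψ h => by
  simp only [boxAverage_eq_div]
  gcongr with j
  exact h j

lemma norm_boxAverage_le {φ : (Fin d → ℤ) → E} {C : ℝ} (hφ : ∀ j, ‖φ j‖ ≤ C) (n : ℕ) :
    ‖boxAverage d n φ‖ ≤ C := by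
  rw [boxAverage_apply, norm_smul, norm_inv, Real.norm_natCast, inv_mul_eq_div]
  refine div_le_of_le_mul₀ (by positivity) ((norm_nonneg _).trans (hφ 0)) ?_
  simpa [mul_comm] using norm_sum_le_of_le (Fbox d n) fun j _ => hφ j

lemma map_boxAverage (L : E →L[ℝ] F) (n : ℕ) (φ : (Fin d → ℤ) → E) :
    L (boxAverage d n φ) = boxAverage d n (fun j => L (φ j)) := by
  simp only [boxAverage_apply, map_smul, map_sum]

lemma boxAverage_mem_convexHull {n : ℕ} (hn : n ≠ 0) (φ : (Fin d → ℤ) → E) :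
    boxAverage d n φ ∈ convexHull ℝ (Set.range φ) := by
  rw [boxAverage_apply, smul_sum]
  have hcard : (#(Fbox d n) : ℝ) ≠ 0 := by exact_mod_cast (card_Fbox_pos hn).ne'
  refine (convex_convexHull ℝ _).sum_mem (fun _ _ => by positivity) ?_
    fun j _ => subset_convexHull ℝ _ (Set.mem_range_self j)
  rw [sum_const, nsmul_eq_mul, mul_inv_cancel₀ hcard]

theorem tendsto_boxAverage_add_sub {φ : (Fin d → ℤ) → E} {C : ℝ} (hφ : ∀ j, ‖φ j‖ ≤ C)
    (k : Fin d → ℤ) :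
    Tendsto (fun n => boxAverage d n (fun j => φ (j + k)) - boxAverage d n φ) atTop (nhds 0) := by
  set m : ℕ := ∑ i, (k i).natAbs
  have abs_le_m (i : Fin d) : |k i| ≤ m := by
    rw [Int.abs_eq_natAbs]
    exact_mod_cast single_le_sum (f := fun i => (k i).natAbs) (fun _ _ => Nat.zero_le _)
      (mem_univ i)
  have hlim : Tendsto (fun n : ℕ => 2 * C * ((#(Fbox d (n + 2 * m)) : ℝ) / #(Fbox d n) - 1))
      atTop (nhds 0) := by
    simpa using ((tendsto_card_Fbox_add_div d (2 * m)).sub_const 1).const_mul (2 * C)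
  refine squeeze_zero_norm' ?_ hlim
  filter_upwards [eventually_ne_atTop 0] with n hn
  have hcard : (0 : ℝ) < #(Fbox d n) := by exact_mod_cast card_Fbox_pos hn
  have hshift : translatedBox k n ⊆ translatedBox (fun _ => -m) (n + 2 * m) := fun j hj =>
    mem_translatedBox.2 fun i => by
      have := mem_translatedBox.1 hj i
      have := abs_le.1 (abs_le_m i)
      push_cast
      omega
  have hbox : Fbox d n ⊆ translatedBox (fun _ => -m) (n + 2 * m) := fun j hj =>
    mem_translatedBox.2 fun i => by
      have := mem_Fbox.1 hj i
      push_cast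
      omega
  have hsum := norm_sum_sub_sum_le hshift hbox hφ
  rw [card_translatedBox, card_translatedBox, sum_translatedBox] at hsum
  rw [boxAverage_apply, boxAverage_apply, ← smul_sub, norm_smul, norm_inv, Real.norm_natCast]
  refine (mul_le_mul_of_nonneg_left hsum (by positivity)).trans_eq ?_
  field_simp
  ring

end Average

end Boxes

theorem exists_fixedPoint_mem_closure_convexHull_orbit {d : ℕ} {E : Type*} [NormedAddCommGroup E]
    [NormedSpace ℝ E] [CompleteSpace E] {L : (Fin d → ℤ) → E →L[ℝ] E}
    (hL : ∀ i j, L (i + j) = (L i).comp (L j)) {x : E}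
    (hx : TotallyBounded (Set.range fun j => L j x)) :
    ∃ y ∈ closure (convexHull ℝ (Set.range fun j => L j x)), ∀ k, L k y = y := by
  set K := closure (convexHull ℝ (Set.range fun j => L j x))
  have hK : IsCompact K :=
    (totallyBounded_convexHull.2 hx).closure.isCompact_of_isClosed isClosed_closure
  obtain ⟨y, hyK, ψ, hψ, hy⟩ := hK.tendsto_subseq
    (x := fun n => boxAverage d (n + 1) fun j => L j x)
    fun n => subset_closure (boxAverage_mem_convexHull n.succ_ne_zero _)
  refine ⟨y, hyK, fun k => ?_⟩
  obtain ⟨C, hC⟩ := isBounded_iff_forall_norm_le.1 hx.isBounded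
  have hfolner : Tendsto (fun n => L k (boxAverage d (ψ n + 1) fun j => L j x) -
      boxAverage d (ψ n + 1) fun j => L j x) atTop (nhds 0) := by
    refine ((tendsto_boxAverage_add_sub (fun j => hC _ (Set.mem_range_self j)) k).comp
      ((tendsto_add_atTop_nat 1).comp hψ.tendsto_atTop)).congr fun n => ?_
    simp only [Function.comp_apply, map_boxAverage, add_comm _ k, hL,
      ContinuousLinearMap.comp_apply]
  have hlim := (((L k).continuous.tendsto y).comp hy).sub hy
  exact sub_eq_zero.1 (tendsto_nhds_unique hlim hfolner)

theorem exists_common_eigenvector {ι K V : Type*} [Field K] [IsAlgClosed K] [AddCommGroup V]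
    [Module K V] {f : ι → Module.End K V} (hf : ∀ i j, Commute (f i) (f j)) (W : Submodule K V)
    [FiniteDimensional K W] (hW : W ≠ ⊥) (hinv : ∀ i, ∀ v ∈ W, f i v ∈ W) :
    ∃ v ∈ W, v ≠ 0 ∧ ∃ χ : ι → K, ∀ i, f i v = χ i • v := by
  induction hn : Module.finrank K W using Nat.strong_induction_on generalizing W with
  | h n ih =>
    subst hn
    by_cases hscalar : ∀ i, ∃ c, W ≤ (f i).eigenspace c
    · choose χ hχ using hscalar
      obtain ⟨v, hv, hv0⟩ := W.ne_bot_iff.1 hW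
      exact ⟨v, hv, hv0, χ, fun i => Module.End.mem_eigenspace_iff.1 (hχ i hv)⟩
    push Not at hscalar
    obtain ⟨i, hi⟩ := hscalar
    have : Nontrivial W := Submodule.nontrivial_iff_ne_bot.2 hW
    obtain ⟨c, hc⟩ := Module.End.exists_eigenvalue ((f i).restrict (hinv i))
    obtain ⟨w, hw⟩ := hc.exists_hasEigenvector
    have hlt : W ⊓ (f i).eigenspace c < W := inf_lt_left.2 (hi c)
    have : FiniteDimensional K ↥(W ⊓ (f i).eigenspace c) :=
      Submodule.finiteDimensional_of_le hlt.le
    have hne : W ⊓ (f i).eigenspace c ≠ ⊥ := (Submodule.ne_bot_iff _).2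
      ⟨w, ⟨w.2, Module.End.mem_eigenspace_iff.2 (congrArg Subtype.val hw.apply_eq_smul)⟩,
        fun h => hw.2 (Subtype.ext h)⟩
    have hinv' : ∀ j, ∀ v ∈ W ⊓ (f i).eigenspace c, f j v ∈ W ⊓ (f i).eigenspace c :=
      fun j v hv => ⟨hinv j v hv.1, Module.End.mem_eigenspace_iff.2 <| by
        rw [← Module.End.mul_apply, (hf i j).eq, Module.End.mul_apply,
          Module.End.mem_eigenspace_iff.1 hv.2, map_smul]⟩
    obtain ⟨v, hv, hv0, χ, hχ⟩ := ih _ (Submodule.finrank_lt_finrank_of_lt hlt) _ hne hinv' rfl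
    exact ⟨v, hv.1, hv0, χ, hχ⟩

section CompactOperators

variable {H : Type*} [NormedAddCommGroup H] [InnerProductSpace ℂ H]

lemma isCompactOperator_rankOne (x y : H) :
    IsCompactOperator (InnerProductSpace.rankOne ℂ x y) := by
  rw [InnerProductSpace.rankOne_def']
  exact (isCompactOperator_of_locallyCompactSpace_dom (innerSL ℂ y)).clm_comp
    (ContinuousLinearMap.toSpanSingleton ℂ x)

lemma continuous_rankOne_self : Continuous fun x : H => InnerProductSpace.rankOne ℂ x x :=
  (ContinuousLinearMap.toSpanSingletonCLE (𝕜 := ℂ) (E := H)).continuous.clm_comp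
    (innerSL ℂ).continuous

lemma re_inner_rankOne_self (x y : H) :
    (inner ℂ y (InnerProductSpace.rankOne ℂ x x y)).re = ‖inner ℂ x y‖ ^ 2 := by
  rw [InnerProductSpace.rankOne_apply, inner_smul_right, ← inner_conj_symm y x, Complex.mul_conj,
    Complex.ofReal_re, Complex.normSq_eq_norm_sq]

end CompactOperators

section RankOneHull

variable {H : Type*} [NormedAddCommGroup H] [InnerProductSpace ℂ H] {A : Set H} {S : H →L[ℂ] H}

/-- The closed convex hull of the operators `⟨x, ·⟩ x` with `x ∈ A`, i.e. the covariance operators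
of the probability measures carried by `A`. -/
def rankOneHull (A : Set H) : Set (H →L[ℂ] H) :=
  closure (convexHull ℝ ((fun x => InnerProductSpace.rankOne ℂ x x) '' A))

lemma rankOneHull_subset {C : Set (H →L[ℂ] H)} (hconvex : Convex ℝ C) (hclosed : IsClosed C)
    (hA : ∀ x ∈ A, InnerProductSpace.rankOne ℂ x x ∈ C) : rankOneHull A ⊆ C :=
  closure_minimal (convexHull_min (Set.image_subset_iff.2 hA) hconvex) hclosed

lemma isCompactOperator_of_mem_rankOneHull [CompleteSpace H] (hS : S ∈ rankOneHull A) :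
    IsCompactOperator S :=
  rankOneHull_subset ((compactOperator (RingHom.id ℂ) H H).restrictScalars ℝ).convex
    isClosed_setOfPred_isCompactOperator (fun x _ => isCompactOperator_rankOne x x) hS

lemma isSymmetric_of_mem_rankOneHull [CompleteSpace H] (hS : S ∈ rankOneHull A) :
    S.IsSymmetric :=
  ContinuousLinearMap.isSelfAdjoint_iff_isSymmetric.1 <|
    rankOneHull_subset (selfAdjoint.submodule ℝ (H →L[ℂ] H)).convex
      (isClosed_eq continuous_star continuous_id)
      (fun x _ => ContinuousLinearMap.isSelfAdjoint_iff_isSymmetric.2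
        (InnerProductSpace.isSymmetric_rankOne_self x)) hS

lemma apply_eq_zero_of_mem_rankOneHull (hS : S ∈ rankOneHull A) {v : H}
    (hv : ∀ x ∈ A, inner ℂ x v = 0) : S v = 0 := by
  let evalAt : (H →L[ℂ] H) →L[ℝ] H := (ContinuousLinearMap.apply ℂ H v).restrictScalars ℝ
  refine rankOneHull_subset (LinearMap.ker evalAt.toLinearMap).convex evalAt.isClosed_ker
    (fun x hx => ?_) hS
  change InnerProductSpace.rankOne ℂ x x v = 0
  rw [InnerProductSpace.rankOne_apply, hv x hx, zero_smul]

lemma half_sq_le_norm_inner {r : ℝ} {x y : H} (hr : r ≤ ‖x‖) (hxy : dist x y ≤ r / 2) :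
    r ^ 2 / 2 ≤ ‖inner ℂ x y‖ := by
  have hr0 : 0 ≤ r := by linarith [dist_nonneg.trans hxy]
  rw [dist_eq_norm] at hxy
  calc r ^ 2 / 2 = r * (r - r / 2) := by ring
    _ ≤ ‖x‖ * (‖x‖ - ‖x - y‖) := by gcongr; linarith
    _ = ‖inner ℂ x x‖ - ‖x‖ * ‖x - y‖ := by
        rw [inner_self_eq_norm_sq_to_K, norm_pow, RCLike.norm_ofReal, abs_norm]
        ring
    _ ≤ ‖inner ℂ x x‖ - ‖inner ℂ x (x - y)‖ := by gcongr; exact norm_inner_le_norm _ _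
    _ ≤ ‖inner ℂ x y‖ := by
        have := norm_sub_norm_le (inner ℂ x x) (inner ℂ x (x - y))
        rwa [← inner_sub_right, sub_sub_cancel] at this

lemma ne_zero_of_mem_rankOneHull (hS : S ∈ rankOneHull A) (hA : TotallyBounded A) {r : ℝ}
    (hr : 0 < r) (hAr : ∀ x ∈ A, r ≤ ‖x‖) : S ≠ 0 := by
  obtain ⟨t, ht, hcov⟩ := Metric.totallyBounded_iff.1 hA (r / 2) (by positivity)
  let trace : (H →L[ℂ] H) →L[ℝ] ℝ := ∑ y ∈ ht.toFinset,
    Complex.reCLM ∘L ((innerSL ℂ y ∘L ContinuousLinearMap.apply ℂ H y).restrictScalars ℝ)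
  have trace_apply (R : H →L[ℂ] H) : trace R = ∑ y ∈ ht.toFinset, (inner ℂ y (R y)).re := by
    simp [trace]
  have trace_ge : (r ^ 2 / 2) ^ 2 ≤ trace S := by
    refine rankOneHull_subset (C := {R | (r ^ 2 / 2) ^ 2 ≤ trace R})
      (convex_halfSpace_ge trace.isLinear _) (isClosed_le continuous_const trace.continuous)
      (fun x hx => ?_) hS
    obtain ⟨y, hy, hxy⟩ := Set.mem_iUnion₂.1 (hcov hx)
    rw [Set.mem_ofPred_eq, trace_apply]
    simp only [re_inner_rankOne_self]
    calc (r ^ 2 / 2) ^ 2 ≤ ‖inner ℂ x y‖ ^ 2 := by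
          gcongr
          exact half_sq_le_norm_inner (hAr x hx) (mem_ball.1 hxy).le
      _ ≤ ∑ y ∈ ht.toFinset, ‖inner ℂ x y‖ ^ 2 :=
          single_le_sum (f := fun y => ‖inner ℂ x y‖ ^ 2) (fun _ _ => by positivity)
            (ht.mem_toFinset.2 hy)
  rintro rfl
  rw [map_zero] at trace_ge
  exact absurd trace_ge (not_le.2 (by positivity))

end RankOneHull

section JointEigenspaces

variable {ι H : Type*} [NormedAddCommGroup H] [InnerProductSpace ℂ H]

/-- The joint eigenspace of a family of isometries `U` for the eigenvalues `χ`. -/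
def jointEigenspace (U : ι → H →ₗᵢ[ℂ] H) (χ : ι → ℂ) : Submodule ℂ H :=
  ⨅ i, Module.End.eigenspace (U i).toLinearMap (χ i)

/-- The closed span of all joint eigenvectors of `U`. -/
def eigenvectorSpan (U : ι → H →ₗᵢ[ℂ] H) : Submodule ℂ H :=
  (⨆ χ, jointEigenspace U χ).topologicalClosure

lemma mem_jointEigenspace {U : ι → H →ₗᵢ[ℂ] H} {χ : ι → ℂ} {v : H} :
    v ∈ jointEigenspace U χ ↔ ∀ i, U i v = χ i • v := by
  simp only [jointEigenspace, Submodule.mem_iInf, Module.End.mem_eigenspace_iff,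
    LinearIsometry.coe_toLinearMap]

lemma mem_eigenvectorSpan {U : ι → H →ₗᵢ[ℂ] H} {χ : ι → ℂ} {v : H}
    (hv : v ∈ jointEigenspace U χ) : v ∈ eigenvectorSpan U :=
  Submodule.le_topologicalClosure _ (Submodule.mem_iSup_of_mem χ hv)

lemma norm_eq_one_of_mem_jointEigenspace {U : ι → H →ₗᵢ[ℂ] H} {χ : ι → ℂ} {v : H} (hv0 : v ≠ 0)
    (hv : v ∈ jointEigenspace U χ) (i : ι) : ‖χ i‖ = 1 := by
  have hnorm := congrArg norm (mem_jointEigenspace.1 hv i)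
  rw [LinearIsometry.norm_map, norm_smul] at hnorm
  exact mul_right_cancel₀ (norm_ne_zero_iff.2 hv0) (hnorm.symm.trans (one_mul _).symm)

lemma mem_orthogonal_eigenvectorSpan {U : ι → H →ₗᵢ[ℂ] H} {w : H} :
    w ∈ (eigenvectorSpan U)ᗮ ↔ ∀ χ, ∀ v ∈ jointEigenspace U χ, inner ℂ v w = 0 := by
  simp only [eigenvectorSpan, Submodule.orthogonal_closure, ← Submodule.iInf_orthogonal,
    Submodule.mem_iInf, Submodule.mem_orthogonal]

lemma map_mem_eigenvectorSpan (U : ι → H →ₗᵢ[ℂ] H) (i : ι) {v : H} (hv : v ∈ eigenvectorSpan U) :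
    U i v ∈ eigenvectorSpan U := by
  have hclosed : IsClosed ((eigenvectorSpan U).comap (U i).toLinearMap : Set H) :=
    (Submodule.isClosed_topologicalClosure _).preimage (U i).continuous
  refine Submodule.topologicalClosure_minimal _ (iSup_le fun χ v hv => ?_) hclosed hv
  rw [Submodule.mem_comap, LinearIsometry.coe_toLinearMap, mem_jointEigenspace.1 hv i]
  exact Submodule.smul_mem _ _ (mem_eigenvectorSpan hv)

lemma map_mem_orthogonal_eigenvectorSpan (U : ι → H →ₗᵢ[ℂ] H) (i : ι) {w : H}
    (hw : w ∈ (eigenvectorSpan U)ᗮ) : U i w ∈ (eigenvectorSpan U)ᗮ := by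
  refine mem_orthogonal_eigenvectorSpan.2 fun χ v hv => ?_
  rcases eq_or_ne v 0 with rfl | hv0
  · exact inner_zero_left _
  have hχ : χ i ≠ 0 := fun h => by simpa [h] using norm_eq_one_of_mem_jointEigenspace hv0 hv i
  have hzero : inner ℂ (χ i • v) (U i w) = 0 := by
    rw [← mem_jointEigenspace.1 hv i, LinearIsometry.inner_map_map,
      mem_orthogonal_eigenvectorSpan.1 hw χ v hv]
  rw [inner_smul_left] at hzero
  exact (mul_eq_zero.1 hzero).resolve_left ((map_ne_zero _).2 hχ)

end JointEigenspaces

section AlmostPeriodicVectors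

variable {d : ℕ} {H : Type*} [NormedAddCommGroup H] [InnerProductSpace ℂ H] [CompleteSpace H]
  {U : (Fin d → ℤ) → H →ₗᵢ[ℂ] H}

lemma totallyBounded_rankOne_image {A : Set H} (hA : TotallyBounded A) :
    TotallyBounded ((fun x => InnerProductSpace.rankOne ℂ x x) '' A) :=
  ((hA.closure.isCompact_of_isClosed isClosed_closure).image
    continuous_rankOne_self).totallyBounded.subset (Set.image_mono subset_closure)

lemma exists_commuting_mem_rankOneHull_orbit (hU : ∀ i j v, U (i + j) v = U i (U j v)) {f : H}
    (hf : TotallyBounded (Set.range fun j => U j f)) :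
    ∃ S ∈ rankOneHull (Set.range fun j => U j f), ∀ k v, S (U k v) = U k (S v) := by
  let u (j : Fin d → ℤ) : H →L[ℂ] H := (U j).toContinuousLinearMap
  have u_add (i j : Fin d → ℤ) : u (i + j) = u i ∘L u j := ContinuousLinearMap.ext (hU i j)
  let conj (j : Fin d → ℤ) : (H →L[ℂ] H) →L[ℝ] (H →L[ℂ] H) :=
    (ContinuousLinearMap.compL ℂ H H H (u j) ∘L
      (ContinuousLinearMap.compL ℂ H H H).flip (u j).adjoint).restrictScalars ℝ
  have conj_apply (j : Fin d → ℤ) (R : H →L[ℂ] H) : conj j R = u j ∘L R ∘L (u j).adjoint := rfl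
  have conj_add (i j : Fin d → ℤ) : conj (i + j) = (conj i).comp (conj j) := by
    ext R : 1
    simp only [conj_apply, u_add, ContinuousLinearMap.adjoint_comp, ContinuousLinearMap.comp_apply,
      ContinuousLinearMap.comp_assoc]
  have orbit_eq : (Set.range fun j => conj j (InnerProductSpace.rankOne ℂ f f)) =
      (fun x => InnerProductSpace.rankOne ℂ x x) '' Set.range fun j => U j f := by
    rw [← Set.range_comp]
    congr 1 with j : 1
    rw [conj_apply, InnerProductSpace.rankOne_comp, InnerProductSpace.comp_rankOne,
      ContinuousLinearMap.adjoint_adjoint]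
    rfl
  obtain ⟨S, hS, hfixed⟩ := exists_fixedPoint_mem_closure_convexHull_orbit conj_add
    (orbit_eq ▸ totallyBounded_rankOne_image hf)
  rw [orbit_eq] at hS
  refine ⟨S, hS, fun k v => ?_⟩
  have hisom : (u k).adjoint (u k v) = v :=
    DFunLike.congr_fun
      ((u k).norm_map_iff_adjoint_comp_self.1 (U k).norm_map) v
  calc S (U k v) = u k (S ((u k).adjoint (u k v))) :=
        (DFunLike.congr_fun (hfixed k) (U k v)).symm
    _ = U k (S v) := by rw [hisom]; rfl

theorem exists_jointEigenvector_not_orthogonal_orbit (hU : ∀ i j v, U (i + j) v = U i (U j v))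
    {f : H} (hf0 : f ≠ 0) (hf : TotallyBounded (Set.range fun j => U j f)) :
    ∃ χ, ∃ v ∈ jointEigenspace U χ, ∃ j, inner ℂ (U j f) v ≠ 0 := by
  obtain ⟨S, hS, hcomm⟩ := exists_commuting_mem_rankOneHull_orbit hU hf
  have hScompact := isCompactOperator_of_mem_rankOneHull hS
  have hS0 : S ≠ 0 := ne_zero_of_mem_rankOneHull hS hf (norm_pos_iff.2 hf0) <| by
    rintro _ ⟨j, rfl⟩
    exact ((U j).norm_map f).ge
  obtain ⟨c, hc, hc0⟩ : ∃ c, Module.End.HasEigenvalue (S : Module.End ℂ H) c ∧ c ≠ 0 := by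
    by_contra! hzero
    exact hS0 ((ContinuousLinearMap.eq_zero_of_forall_hasEigenvalue_eq_zero hScompact
      (isSymmetric_of_mem_rankOneHull hS)).1 hzero)
  have := ContinuousLinearMap.finite_dimensional_eigenspace hScompact c hc0
  obtain ⟨v, hv, hv0, χ, hχ⟩ := exists_common_eigenvector (f := fun j => (U j).toLinearMap)
    (fun i j => LinearMap.ext fun v => by
      change U i (U j v) = U j (U i v)
      rw [← hU, add_comm, hU])
    (Module.End.eigenspace (S : Module.End ℂ H) c) hc fun j v hv => by
      rw [Module.End.mem_eigenspace_iff] at hv ⊢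
      change S (U j v) = c • U j v
      rw [hcomm, ← map_smul]
      exact congrArg (U j) hv
  refine ⟨χ, v, mem_jointEigenspace.2 hχ, ?_⟩
  by_contra! horth
  have hSv : S v = 0 := apply_eq_zero_of_mem_rankOneHull hS (by rintro _ ⟨j, rfl⟩; exact horth j)
  exact smul_ne_zero hc0 hv0 ((Module.End.mem_eigenspace_iff.1 hv).symm.trans hSv)

theorem mem_eigenvectorSpan_of_totallyBounded_orbit (hU : ∀ i j v, U (i + j) v = U i (U j v))
    {f : H} (hf : TotallyBounded (Set.range fun j => U j f)) : f ∈ eigenvectorSpan U := by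
  have : CompleteSpace (eigenvectorSpan U) :=
    inferInstanceAs (CompleteSpace (Submodule.topologicalClosure _))
  obtain ⟨m, hm, w, hw, rfl⟩ := (eigenvectorSpan U).exists_add_mem_mem_orthogonal f
  have proj_orbit (j : Fin d → ℤ) : (eigenvectorSpan U)ᗮ.starProjection (U j (m + w)) = U j w := by
    rw [map_add, map_add,
      Submodule.starProjection_orthogonal_apply_eq_zero (map_mem_eigenvectorSpan U j hm), zero_add,
      Submodule.starProjection_eq_self_iff.2 (map_mem_orthogonal_eigenvectorSpan U j hw)]
  have hw_orbit : TotallyBounded (Set.range fun j => U j w) := by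
    have := hf.image (eigenvectorSpan U)ᗮ.starProjection.uniformContinuous
    rwa [← Set.range_comp, Function.comp_def, funext proj_orbit] at this
  rcases eq_or_ne w 0 with rfl | hw0
  · rwa [add_zero]
  obtain ⟨χ, v, hv, j, hj⟩ := exists_jointEigenvector_not_orthogonal_orbit hU hw0 hw_orbit
  exact absurd (inner_eq_zero_symm.1 (mem_orthogonal_eigenvectorSpan.1
    (map_mem_orthogonal_eigenvectorSpan U j hw) χ v hv)) hj

end AlmostPeriodicVectors

lemma exists_pairwise_le_dist_of_not_totallyBounded {ι α : Type*} [PseudoMetricSpace α] {u : ι → α}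
    (hu : ¬TotallyBounded (Set.range u)) :
    ∃ ε > 0, ∃ ψ : ℕ → ι, Pairwise fun m n => ε ≤ dist (u (ψ m)) (u (ψ n)) := by
  rw [Metric.totallyBounded_iff] at hu
  push Not at hu
  obtain ⟨ε, hε, hcov⟩ := hu
  have : Std.Symm fun i j => ε ≤ dist (u i) (u j) := ⟨fun i j h => dist_comm (u i) (u j) ▸ h⟩
  obtain ⟨ψ, -, hψ⟩ := exists_seq_of_forall_finset_exists' (fun _ : ι => True)
    (fun i j => ε ≤ dist (u i) (u j)) fun s _ => by
      obtain ⟨_, ⟨j, rfl⟩, hj⟩ := Set.not_subset.1 (hcov (u '' s) (s.finite_toSet.image u))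
      simp only [Set.mem_iUnion, Set.mem_image, not_exists, mem_ball, not_lt] at hj
      exact ⟨j, trivial, fun i hi => dist_comm (u j) (u i) ▸ hj _ ⟨i, hi, rfl⟩⟩
  exact ⟨ε, hε, ψ, hψ⟩

section FiniteMeasure

variable [MeasurableSpace X] {μ : Measure X} [IsFiniteMeasure μ]

lemma exists_ne_measure_preimage_inter_preimage_ne_zero {ι : Type*} [Infinite ι] {S : ι → X → X}
    (hS : ∀ i, MeasurePreserving (S i) μ μ) {A : Set X} (hA : MeasurableSet A) (hA0 : μ A ≠ 0) :
    ∃ i j, i ≠ j ∧ μ (S i ⁻¹' A ∩ S j ⁻¹' A) ≠ 0 := by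
  by_contra! hdisj
  refine Set.infinite_univ (α := ι) ((Measure.finite_const_le_meas_of_disjoint_iUnion₀ μ
    (pos_iff_ne_zero.2 hA0) (fun i => ((hS i).measurable hA).nullMeasurableSet)
    (fun i j hij => hdisj i j hij) (measure_ne_top _ _)).subset fun i _ => ?_)
  exact ((hS i).measure_preimage hA.nullMeasurableSet).ge

theorem le_integral_limsup {F : ℕ → X → ℝ} (hF : ∀ n, Measurable (F n)) {C : ℝ}
    (hC : ∀ n x, |F n x| ≤ C) {c : ℝ} (hc : ∀ᶠ n in atTop, c ≤ ∫ x, F n x ∂μ) :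
    c ≤ ∫ x, limsup (fun n => F n x) atTop ∂μ := by
  set L : X → ℝ := fun x => limsup (fun n => F n x) atTop
  have hL : Measurable L := Measurable.limsup hF
  have bdd_above (x : X) : IsBoundedUnder (· ≤ ·) atTop fun n => F n x :=
    isBoundedUnder_of ⟨C, fun n => (abs_le.1 (hC n x)).2⟩
  have bdd_below (x : X) : IsBoundedUnder (· ≥ ·) atTop fun n => F n x :=
    isBoundedUnder_of ⟨-C, fun n => (abs_le.1 (hC n x)).1⟩
  have abs_L_le (x : X) : |L x| ≤ C := abs_le.2
    ⟨le_limsup_of_le (bdd_above x) fun b hb => by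
      obtain ⟨n, hn⟩ := hb.exists
      exact (abs_le.1 (hC n x)).1.trans hn,
    limsup_le_of_le (bdd_below x).isCoboundedUnder_le
      (Eventually.of_forall fun n => (abs_le.1 (hC n x)).2)⟩
  have abs_max_le (n : ℕ) (x : X) : |max (F n x) (L x)| ≤ C :=
    abs_max_le_max_abs_abs.trans (max_le (hC n x) (abs_L_le x))
  have tendsto_max (x : X) : Tendsto (fun n => max (F n x) (L x)) atTop (nhds (L x)) := by
    refine tendsto_order.2 ⟨fun a ha => Eventually.of_forall fun n => lt_max_of_lt_right ha,
      fun a ha => ?_⟩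
    filter_upwards [eventually_lt_of_limsup_lt ha (bdd_above x)] with n hn
    exact max_lt hn ha
  refine ge_of_tendsto (tendsto_integral_of_dominated_convergence (fun _ => C)
    (fun n => ((hF n).max hL).aestronglyMeasurable) (integrable_const C)
    (fun n => ae_of_all _ (abs_max_le n)) (ae_of_all _ tendsto_max)) ?_
  filter_upwards [hc] with n hn
  refine hn.trans (integral_mono ?_ ?_ fun x => le_max_left _ _)
  · exact .of_bound (hF n).aestronglyMeasurable C (ae_of_all _ (hC n))
  · exact .of_bound ((hF n).max hL).aestronglyMeasurable C (ae_of_all _ (abs_max_le n))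

end FiniteMeasure

lemma limsup_eq_limsup_of_tendsto_sub {u v : ℕ → ℝ} {C : ℝ} (hu : ∀ n, |u n| ≤ C)
    (hv : ∀ n, |v n| ≤ C) (huv : Tendsto (fun n => u n - v n) atTop (nhds 0)) :
    limsup u atTop = limsup v atTop := by
  have bdd {w : ℕ → ℝ} {C : ℝ} (hw : ∀ n, |w n| ≤ C) :
      IsBoundedUnder (· ≤ ·) atTop w ∧ IsBoundedUnder (· ≥ ·) atTop w :=
    ⟨isBoundedUnder_of ⟨C, fun n => (abs_le.1 (hw n)).2⟩,
      isBoundedUnder_of ⟨-C, fun n => (abs_le.1 (hw n)).1⟩⟩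
  have limsup_le {u v : ℕ → ℝ} (hv : ∀ n, |v n| ≤ C)
      (huv : Tendsto (fun n => u n - v n) atTop (nhds 0)) : limsup u atTop ≤ limsup v atTop := by
    have hle := limsup_add_le huv.isBoundedUnder_ge huv.isBoundedUnder_le
      (bdd hv).2.isCoboundedUnder_le (bdd hv).1
    simpa only [Pi.add_def, sub_add_cancel, huv.limsup_eq, zero_add] using hle
  exact le_antisymm (limsup_le hv huv) (limsup_le hu (by simpa using huv.neg))

section Action

variable {G : Type*} [AddCommGroup G] [MeasurableSpace X] {μ : Measure X} {T : G → X → X}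

/-- A measure-preserving action of `G` by the maps `T j`. The identity `T 0 = id` is not required;
`T 0` is in general only an idempotent. -/
structure IsMeasurePreservingAction (μ : Measure X) (T : G → X → X) : Prop where
  measurePreserving (j : G) : MeasurePreserving (T j) μ μ
  map_add (i j : G) : T (i + j) = T i ∘ T j

/-- An ergodic action on a probability space: strictly invariant measurable sets are trivial. -/
structure IsErgodicAction (μ : Measure X) (T : G → X → X) : Prop
    extends IsMeasurePreservingAction μ T where
  measure_eq_zero_or_one (A : Set X) (hA : MeasurableSet A) (hinv : ∀ j, T j ⁻¹' A = A) :
    μ A = 0 ∨ μ A = 1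

namespace IsMeasurePreservingAction

/-- The Koopman operator `g ↦ g ∘ T j` on `L²`. -/
def koopman (hT : IsMeasurePreservingAction μ T) (j : G) : Lp ℂ 2 μ →ₗᵢ[ℂ] Lp ℂ 2 μ :=
  Lp.compMeasurePreservingₗᵢ ℂ (T j) (hT.measurePreserving j)

variable (hT : IsMeasurePreservingAction μ T)
include hT

lemma apply_apply (i j : G) (x : X) : T i (T j x) = T (i + j) x :=
  (congrFun (hT.map_add i j) x).symm

lemma coeFn_koopman (j : G) (g : Lp ℂ 2 μ) : hT.koopman j g =ᵐ[μ] g ∘ T j :=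
  Lp.coeFn_compMeasurePreserving g (hT.measurePreserving j)

lemma koopman_toLp (j : G) {f : X → ℂ} (hf : MemLp f 2 μ) :
    hT.koopman j (hf.toLp f) =
      (hf.comp_measurePreserving (hT.measurePreserving j)).toLp (f ∘ T j) :=
  rfl

lemma koopman_add (i j : G) (g : Lp ℂ 2 μ) :
    hT.koopman (i + j) g = hT.koopman i (hT.koopman j g) := by
  refine Lp.ext ?_
  filter_upwards [hT.coeFn_koopman (i + j) g, hT.coeFn_koopman i (hT.koopman j g),
    (hT.measurePreserving i).quasiMeasurePreserving.ae_eq_comp (hT.coeFn_koopman j g)]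
    with x hij hi hj
  rw [hij, hi, hj, Function.comp_apply, Function.comp_apply, Function.comp_apply, hT.apply_apply,
    add_comm]

end IsMeasurePreservingAction

namespace IsErgodicAction

variable [IsProbabilityMeasure μ] (hT : IsErgodicAction μ T)
include hT

lemma ae_mem_or_ae_notMem [Countable G] {A : Set X} (hA : MeasurableSet A)
    (hinv : ∀ j, (T j ⁻¹' A : Set X) =ᵐ[μ] A) : (∀ᵐ x ∂μ, x ∈ A) ∨ ∀ᵐ x ∂μ, x ∉ A := by
  set B : Set X := ⋂ j, T j ⁻¹' A
  have hB : MeasurableSet B := .iInter fun j => (hT.measurePreserving j).measurable hA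
  have hBA : B =ᵐ[μ] A := by
    simpa only [Set.iInter_const] using Filter.EventuallyEq.countable_iInter hinv
  have hBinv (k : G) : T k ⁻¹' B = B := by
    ext x
    simp only [B, Set.preimage_iInter, Set.mem_iInter, Set.mem_preimage, hT.apply_apply]
    exact (Equiv.addRight k).forall_congr_left.trans (by simp)
  rcases hT.measure_eq_zero_or_one B hB hBinv with h | h
  · exact .inr (measure_eq_zero_iff_ae_notMem.1 ((measure_congr hBA).symm.trans h))
  · exact .inl ((mem_ae_iff_prob_eq_one hA).2 ((measure_congr hBA).symm.trans h))

theorem ae_eq_const [Countable G] {E : Type*} [TopologicalSpace E]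
    [TopologicalSpace.PseudoMetrizableSpace E]
    [SecondCountableTopology E] [T0Space E] [Nonempty E] {g : X → E} (hg : AEStronglyMeasurable g μ)
    (hinv : ∀ j, g ∘ T j =ᵐ[μ] g) : ∃ c : E, g =ᵐ[μ] fun _ => c := by
  borelize E
  have hmk := hg.ae_eq_mk
  have hmk_inv (j : G) : hg.mk g ∘ T j =ᵐ[μ] hg.mk g :=
    ((hT.measurePreserving j).quasiMeasurePreserving.ae_eq_comp hmk).symm.trans
      ((hinv j).trans hmk)
  obtain ⟨c, hc⟩ := exists_eventuallyEq_const_of_forall_separating (f := hg.mk g)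
    MeasurableSet fun s hs => hT.ae_mem_or_ae_notMem
      (hg.stronglyMeasurable_mk.measurable hs) fun j => (hmk_inv j).preimage s
  exact ⟨c, hmk.trans hc⟩

end IsErgodicAction

section BoxAverages

variable {d : ℕ} {T : (Fin d → ℤ) → X → X}

lemma IsMeasurePreservingAction.integrable_boxAverage (hT : IsMeasurePreservingAction μ T)
    {h : X → ℝ} (hh : Integrable h μ) (n : ℕ) :
    Integrable (fun x => boxAverage d n (fun j => h (T j x))) μ := by
  simp only [boxAverage_apply]
  exact (integrable_finsetSum _ fun j _ =>
    (hT.measurePreserving j).integrable_comp_of_integrable hh).const_mul _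

lemma IsMeasurePreservingAction.integral_boxAverage (hT : IsMeasurePreservingAction μ T) {h : X → ℝ}
    (hh : Integrable h μ) {n : ℕ} (hn : n ≠ 0) :
    ∫ x, boxAverage d n (fun j => h (T j x)) ∂μ = ∫ x, h x ∂μ := by
  have hint (j : Fin d → ℤ) : ∫ x, h (T j x) ∂μ = ∫ x, h x ∂μ :=
    (integral_map (hT.measurePreserving j).aemeasurable
      ((hT.measurePreserving j).map_eq.symm ▸ hh.aestronglyMeasurable)).symm.trans
      (congrArg (∫ x, h x ∂·) (hT.measurePreserving j).map_eq)
  simp only [boxAverage_apply, integral_smul]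
  rw [integral_finsetSum (f := fun j x => h (T j x)) _ fun j _ =>
    (hT.measurePreserving j).integrable_comp_of_integrable hh]
  simp only [hint, ← boxAverage_apply, boxAverage_const hn]

lemma IsMeasurePreservingAction.measurable_boxAverage (hT : IsMeasurePreservingAction μ T)
    {h : X → ℝ} (hh : Measurable h) (n : ℕ) :
    Measurable fun x => boxAverage d n (fun j => h (T j x)) := by
  simp only [boxAverage_apply]
  exact (Finset.measurable_fun_sum _ fun j _ =>
    hh.comp (hT.measurePreserving j).measurable).const_mul _

-- The limsup is an invariant function, hence a constant, and reverse Fatou bounds this constant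
-- below by the common integral of the averages; the pointwise ergodic theorem is not needed.
theorem IsErgodicAction.ae_integral_le_limsup_boxAverage [IsProbabilityMeasure μ]
    (hT : IsErgodicAction μ T) {h : X → ℝ} (hh : Measurable h) {C : ℝ} (hC : ∀ x, |h x| ≤ C) :
    ∀ᵐ x ∂μ, ∫ y, h y ∂μ ≤ limsup (fun n => boxAverage d n (fun j => h (T j x))) atTop := by
  set L : X → ℝ := fun x => limsup (fun n => boxAverage d n (fun j => h (T j x))) atTop
  have abs_average_le (n : ℕ) (x : X) : |boxAverage d n (fun j => h (T j x))| ≤ C :=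
    norm_boxAverage_le (φ := fun j => h (T j x)) (fun j => hC (T j x)) n
  have measurable_average (n : ℕ) := hT.measurable_boxAverage hh n
  have L_comp (k : Fin d → ℤ) : L ∘ T k = L := by
    funext x
    refine limsup_eq_limsup_of_tendsto_sub (abs_average_le · (T k x)) (abs_average_le · x) ?_
    simpa only [hT.apply_apply] using
      tendsto_boxAverage_add_sub (φ := fun j => h (T j x)) (fun j => hC (T j x)) k
  obtain ⟨c, hc⟩ := hT.ae_eq_const (Measurable.limsup measurable_average).aestronglyMeasurable
    fun k => .of_eq (L_comp k)
  have hle : ∫ y, h y ∂μ ≤ ∫ x, L x ∂μ := by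
    refine le_integral_limsup measurable_average abs_average_le ?_
    filter_upwards [eventually_ne_atTop 0] with n hn
    exact (hT.integral_boxAverage (.of_bound hh.aestronglyMeasurable C (ae_of_all _ hC)) hn).ge
  rw [integral_congr_ae hc, integral_const, probReal_univ, one_smul] at hle
  filter_upwards [hc] with x hx
  exact hle.trans_eq hx.symm

end BoxAverages

end Action

section MeanDistance

variable {d : ℕ} {T : (Fin d → ℤ) → X → X} {f : X → ℂ} {C : ℝ}

lemma dF_eq_sqrt_limsup (hC : ∀ x, ‖f x‖ ≤ C) (x y : X) :
    dF T f x y =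
      √(limsup (fun n => boxAverage d n (fun j => ‖f (T j x) - f (T j y)‖ ^ 2)) atTop) := by
  have abs_average_le (n : ℕ) :
      |boxAverage d n (fun j => ‖f (T j x) - f (T j y)‖ ^ 2)| ≤ (C + C) ^ 2 :=
    norm_boxAverage_le (φ := fun j => ‖f (T j x) - f (T j y)‖ ^ 2) (fun j => by
      rw [norm_pow, norm_norm]
      gcongr
      exact (norm_sub_le _ _).trans (add_le_add (hC _) (hC _))) n
  rw [Monotone.map_limsup_of_continuousAt (fun _ _ => Real.sqrt_le_sqrt) _
    Real.continuous_sqrt.continuousAt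
    (isBoundedUnder_of ⟨_, fun n => (abs_le.1 (abs_average_le n)).2⟩)
    (isBoundedUnder_of ⟨_, fun n => (abs_le.1 (abs_average_le n)).1⟩).isCoboundedUnder_le]
  simp only [dF, Function.comp_def, boxAverage_eq_div]

lemma dF_le_sqrt_of_boxAverage_le {g : X → ℂ} {x y : X} {l δ : ℝ}
    (hx : ∀ n, boxAverage d n (fun j => ‖f (T j x) - g (T j x)‖ ^ 2) ≤ l)
    (hy : ∀ n, boxAverage d n (fun j => ‖f (T j y) - g (T j y)‖ ^ 2) ≤ l)
    (hg : ∀ j, ‖g (T j x) - g (T j y)‖ ≤ δ) :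
    dF T f x y ≤ √(3 * (l + l + δ ^ 2)) := by
  have pointwise (j : Fin d → ℤ) : ‖f (T j x) - f (T j y)‖ ^ 2 ≤
      3 * (‖f (T j x) - g (T j x)‖ ^ 2 + ‖f (T j y) - g (T j y)‖ ^ 2 + δ ^ 2) := by
    have htri : ‖f (T j x) - f (T j y)‖ ≤
        ‖f (T j x) - g (T j x)‖ + ‖f (T j y) - g (T j y)‖ + δ := by
      linarith [norm_sub_le_norm_sub_add_norm_sub (f (T j x)) (g (T j x)) (f (T j y)),
        norm_sub_le_norm_sub_add_norm_sub (g (T j x)) (g (T j y)) (f (T j y)), hg j,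
        norm_sub_rev (g (T j y)) (f (T j y))]
    refine (pow_le_pow_left₀ (norm_nonneg _) htri 2).trans ?_
    nlinarith [sq_nonneg (‖f (T j x) - g (T j x)‖ - ‖f (T j y) - g (T j y)‖),
      sq_nonneg (‖f (T j x) - g (T j x)‖ - δ), sq_nonneg (‖f (T j y) - g (T j y)‖ - δ)]
  refine limsup_le_of_le (isCoboundedUnder_le_of_le atTop fun n => Real.sqrt_nonneg _) ?_
  filter_upwards [eventually_ne_atTop 0] with n hn
  rw [← boxAverage_eq_div]
  refine Real.sqrt_le_sqrt ?_
  calc boxAverage d n (fun j => ‖f (T j x) - f (T j y)‖ ^ 2)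
      ≤ boxAverage d n ((3 : ℝ) • ((fun j => ‖f (T j x) - g (T j x)‖ ^ 2) +
          (fun j => ‖f (T j y) - g (T j y)‖ ^ 2) + fun _ => δ ^ 2)) :=
        boxAverage_mono n pointwise
    _ ≤ 3 * (l + l + δ ^ 2) := by
        rw [map_smul, map_add, map_add, boxAverage_const hn, smul_eq_mul]
        gcongr
        exacts [hx n, hy n]

variable [MeasurableSpace X] {μ : Measure X}

lemma norm_toLp_sq (hf : MemLp f 2 μ) : ‖hf.toLp f‖ ^ 2 = ∫ x, ‖f x‖ ^ 2 ∂μ := by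
  have hnonneg : 0 ≤ ∫ x, ‖f x‖ ^ 2 ∂μ := integral_nonneg fun x => sq_nonneg ‖f x‖
  rw [Lp.norm_toLp, hf.eLpNorm_eq_integral_rpow_norm two_ne_zero ENNReal.ofNat_ne_top]
  simp only [ENNReal.toReal_ofNat, Real.rpow_ofNat, ← one_div, ← Real.sqrt_eq_rpow]
  rw [ENNReal.toReal_ofReal (Real.sqrt_nonneg _), Real.sq_sqrt hnonneg]

variable [IsProbabilityMeasure μ]

theorem IsErgodicAction.ae_norm_koopman_sub_koopman_le_dF (hT : IsErgodicAction μ T)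
    (hf : Measurable f) (hf2 : MemLp f 2 μ) (hC : ∀ x, ‖f x‖ ≤ C) (i j : Fin d → ℤ) :
    ∀ᵐ x ∂μ, ‖hT.koopman i (hf2.toLp f) - hT.koopman j (hf2.toLp f)‖ ≤ dF T f (T i x) (T j x) := by
  have hint : ‖hT.koopman i (hf2.toLp f) - hT.koopman j (hf2.toLp f)‖ ^ 2 =
      ∫ x, ‖f (T i x) - f (T j x)‖ ^ 2 ∂μ := by
    rw [hT.koopman_toLp, hT.koopman_toLp, ← MemLp.toLp_sub, norm_toLp_sq]
    rfl
  have hmeas : Measurable fun x => ‖f (T i x) - f (T j x)‖ ^ 2 :=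
    ((hf.comp (hT.measurePreserving i).measurable).sub
      (hf.comp (hT.measurePreserving j).measurable)).norm.pow_const 2
  have hbound (x : X) : |‖f (T i x) - f (T j x)‖ ^ 2| ≤ (C + C) ^ 2 := by
    rw [abs_pow, abs_norm]
    gcongr
    exact (norm_sub_le _ _).trans (add_le_add (hC _) (hC _))
  filter_upwards [hT.ae_integral_le_limsup_boxAverage hmeas hbound] with x hx
  rw [dF_eq_sqrt_limsup hC]
  refine Real.le_sqrt_of_sq_le (hint.trans_le (hx.trans_eq ?_))
  simp only [hT.apply_apply, add_comm]

theorem IsErgodicAction.totallyBounded_orbit_of_not_meanSensitiveFun (hT : IsErgodicAction μ T)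
    (hf : Measurable f) (hf2 : MemLp f 2 μ) (hC : ∀ x, ‖f x‖ ≤ C)
    (hgen : ∀ᵐ x ∂μ, genericSq μ T f x) (hsens : ¬MeanSensitiveFun μ T f) :
    TotallyBounded (Set.range fun j => hT.koopman j (hf2.toLp f)) := by
  by_contra hnot
  obtain ⟨ε, hε, ψ, hψ⟩ := exists_pairwise_le_dist_of_not_totallyBounded hnot
  refine hsens ⟨ε / 2, half_pos hε, fun A hA hA0 => ?_⟩
  obtain ⟨m, n, hmn, hinter⟩ := exists_ne_measure_preimage_inter_preimage_ne_zero
    (fun n => hT.measurePreserving (ψ n)) hA hA0.ne'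
  have ae_generic (j : Fin d → ℤ) : ∀ᵐ x ∂μ, genericSq μ T f (T j x) :=
    (hT.measurePreserving j).quasiMeasurePreserving.ae hgen
  obtain ⟨x, ⟨hxm, hxn⟩, hx⟩ := (frequently_ae_mem_iff.2 hinter).and_eventually
    ((hT.ae_norm_koopman_sub_koopman_le_dF hf hf2 hC (ψ m) (ψ n)).and
      ((ae_generic (ψ m)).and (ae_generic (ψ n)))) |>.exists
  refine ⟨T (ψ m) x, hxm, T (ψ n) x, hxn, hx.2.1, hx.2.2, ?_⟩
  calc ε / 2 < ε := half_lt_self hε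
    _ ≤ _ := hψ hmn
    _ ≤ _ := (dist_eq_norm _ _).trans_le hx.1

lemma genericSq_of_norm_eq_one (hf : ∀ x, ‖f x‖ = 1) (x : X) : genericSq μ T f x := by
  simp only [genericSq, hf, one_pow, integral_const, probReal_univ, smul_eq_mul, mul_one,
    ← boxAverage_eq_div]
  refine tendsto_const_nhds.congr' ?_
  filter_upwards [eventually_ne_atTop 0] with n hn
  exact (boxAverage_const hn 1).symm

end MeanDistance

section Density

variable {d : ℕ} [MeasurableSpace X] {μ : Measure X} [IsProbabilityMeasure μ]
  {T : (Fin d → ℤ) → X → X}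

-- For a unimodular function every point is generic for `|f|²`; genericity for a general bounded
-- function would need the pointwise ergodic theorem.
lemma IsErgodicAction.toLp_mem_eigenvectorSpan_of_norm_eq_one (hT : IsErgodicAction μ T)
    {f : X → ℂ} (hf : Measurable f) (hf1 : ∀ x, ‖f x‖ = 1) (hf2 : MemLp f 2 μ)
    (hsens : ¬MeanSensitiveFun μ T f) : hf2.toLp f ∈ eigenvectorSpan hT.koopman :=
  mem_eigenvectorSpan_of_totallyBounded_orbit hT.koopman_add
    (hT.totallyBounded_orbit_of_not_meanSensitiveFun hf hf2 (fun x => (hf1 x).le)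
      (ae_of_all μ (genericSq_of_norm_eq_one hf1)) hsens)

lemma IsErgodicAction.eigenvectorSpan_koopman_eq_top (hT : IsErgodicAction μ T)
    (hsens : ∀ f : X → ℂ, MemLp f 2 μ → ¬MeanSensitiveFun μ T f) :
    eigenvectorSpan hT.koopman = ⊤ := by
  have mem_of_unimodular {f : X → ℂ} (hf : Measurable f) (hf1 : ∀ x, ‖f x‖ = 1) :
      (MemLp.of_bound hf.aestronglyMeasurable 1 (ae_of_all μ fun x => (hf1 x).le)).toLp f
        ∈ eigenvectorSpan hT.koopman :=
    hT.toLp_mem_eigenvectorSpan_of_norm_eq_one hf hf1 _ (hsens f (.of_bound hf.aestronglyMeasurable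
      1 (ae_of_all μ fun x => (hf1 x).le)))
  refine Submodule.eq_top_iff'.2 fun g => Lp.induction (by norm_num) _ ?_ ?_ ?_ g
  · intro c s hs hμs
    rw [Lp.simpleFunc.coe_indicatorConst]
    set u : X → ℂ := fun x => 2 * s.indicator 1 x - 1
    have hu : Measurable u := ((measurable_one.indicator hs).const_mul 2).sub_const 1
    have hu1 (x : X) : ‖u x‖ = 1 := by
      by_cases hx : x ∈ s <;> norm_num [u, hx]
    have hsum := add_mem (mem_of_unimodular hu hu1)
      (mem_of_unimodular (f := fun _ => 1) measurable_const fun _ => norm_one)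
    convert Submodule.smul_mem _ (c / 2) hsum using 1
    rw [← MemLp.toLp_add, ← MemLp.toLp_const_smul, indicatorConstLp]
    congr 1
    funext x
    by_cases hx : x ∈ s <;> simp [u, hx]
  · rintro f g hf hg - hf' hg'
    exact Submodule.add_mem _ hf' hg'
  · exact Submodule.isClosed_topologicalClosure _

end Density

section DiscreteSpectrum

lemma inner_eq_zero_of_mem_jointEigenspace {ι H : Type*} [NormedAddCommGroup H]
    [InnerProductSpace ℂ H] {U : ι → H →ₗᵢ[ℂ] H} {χ ψ : ι → ℂ} (hne : χ ≠ ψ) {v w : H}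
    (hv : v ∈ jointEigenspace U χ) (hw : w ∈ jointEigenspace U ψ) : inner ℂ v w = 0 := by
  rcases eq_or_ne v 0 with rfl | hv0
  · exact inner_zero_left w
  by_contra h0
  refine hne (funext fun i => ?_)
  have hχ : ‖χ i‖ = 1 := norm_eq_one_of_mem_jointEigenspace hv0 hv i
  have hinner := (U i).inner_map_map v w
  rw [mem_jointEigenspace.1 hv i, mem_jointEigenspace.1 hw i, inner_smul_left, inner_smul_right,
    ← mul_assoc, mul_eq_right₀ h0, ← RCLike.inv_eq_conj hχ] at hinner
  exact (inv_mul_eq_one₀ (norm_ne_zero_iff.1 (hχ.trans_ne one_ne_zero))).1 hinner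

lemma exists_hilbertBasis_of_eigenvectorSpan_eq_top {ι H : Type*} [NormedAddCommGroup H]
    [InnerProductSpace ℂ H] [CompleteSpace H] {U : ι → H →ₗᵢ[ℂ] H} (htop : eigenvectorSpan U = ⊤)
    (hdim : ∀ χ, ∀ v ∈ jointEigenspace U χ, v ≠ 0 →
      jointEigenspace U χ ≤ Submodule.span ℂ {v}) :
    ∃ b : HilbertBasis {χ : ι → ℂ // jointEigenspace U χ ≠ ⊥} ℂ H,
      ∀ χ, b χ ∈ jointEigenspace U χ.1 := by
  have exists_unit (χ : {χ : ι → ℂ // jointEigenspace U χ ≠ ⊥}) :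
      ∃ v ∈ jointEigenspace U χ.1, ‖v‖ = 1 := by
    obtain ⟨v, hv, hv0⟩ := Submodule.exists_mem_ne_zero_of_ne_bot χ.2
    exact ⟨(‖v‖⁻¹ : ℂ) • v, Submodule.smul_mem _ _ hv, norm_smul_inv_norm hv0⟩
  choose e he he1 using exists_unit
  have horth : Orthonormal ℂ e := ⟨he1, fun χ ψ hne =>
    inner_eq_zero_of_mem_jointEigenspace (Subtype.coe_ne_coe.2 hne) (he χ) (he ψ)⟩
  have hcompl : (Submodule.span ℂ (Set.range e))ᗮ = ⊥ := by
    suffices h : (Submodule.span ℂ (Set.range e))ᗮ ≤ (eigenvectorSpan U)ᗮ by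
      rwa [htop, Submodule.top_orthogonal_eq_bot, le_bot_iff] at h
    refine fun w hw => mem_orthogonal_eigenvectorSpan.2 fun χ v hv => ?_
    rcases eq_or_ne v 0 with rfl | hv0
    · exact inner_zero_left w
    let χ' : {χ : ι → ℂ // jointEigenspace U χ ≠ ⊥} :=
      ⟨χ, (Submodule.ne_bot_iff _).2 ⟨v, hv, hv0⟩⟩
    have hspan : v ∈ Submodule.span ℂ {e χ'} :=
      hdim χ (e χ') (he χ') (horth.ne_zero χ') hv
    exact Submodule.inner_right_of_mem_orthogonal
      (Submodule.span_mono (Set.singleton_subset_iff.2 (Set.mem_range_self χ')) hspan) hw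
  refine ⟨HilbertBasis.mkOfOrthogonalEqBot horth hcompl, fun χ => ?_⟩
  rw [HilbertBasis.coe_mkOfOrthogonalEqBot]
  exact he χ

lemma exists_eq_exp_of_map_add {d : ℕ} {χ : (Fin d → ℤ) → ℂ}
    (hadd : ∀ i j, χ (i + j) = χ i * χ j) (hnorm : ∀ j, ‖χ j‖ = 1) :
    ∃ w : Fin d → ℝ, ∀ j, χ j =
      Complex.exp (2 * Real.pi * Complex.I * ∑ k, (w k : ℂ) * (j k : ℂ)) := by
  choose θ hθ using fun k => (Complex.norm_eq_one_iff _).1 (hnorm (Pi.single k 1))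
  have hχ0 : χ 0 = 1 := by
    have h := hadd 0 0
    rw [add_zero] at h
    exact (mul_eq_right₀ (norm_ne_zero_iff.1 ((hnorm 0).trans_ne one_ne_zero))).1 h.symm
  let χ' : AddChar (Fin d → ℤ) ℂ := ⟨χ, hχ0, hadd⟩
  let ψ : AddChar (Fin d → ℤ) ℂ :=
    ⟨fun j => Complex.exp (2 * Real.pi * Complex.I *
      ∑ k, ((θ k / (2 * Real.pi) : ℝ) : ℂ) * (j k : ℂ)), by simp, fun i j => by
        simp only [← Complex.exp_add, Pi.add_apply, Int.cast_add, mul_add, sum_add_distrib]⟩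
  have hψ (k : Fin d) : χ' (Pi.single k 1) = ψ (Pi.single k 1) := by
    refine (hθ k).symm.trans (congrArg Complex.exp ?_)
    rw [sum_eq_single k (fun i _ hi => by simp [hi]) (by simp)]
    have : (Real.pi : ℂ) ≠ 0 := by exact_mod_cast Real.pi_ne_zero
    rw [Pi.single_eq_same]
    push_cast
    field_simp
  have hχψ : χ' = ψ := AddChar.toAddMonoidHomEquiv.injective
    (AddMonoidHom.functions_ext' _ _ _ fun k => AddMonoidHom.ext_int (hψ k))
  exact ⟨fun k => θ k / (2 * Real.pi), DFunLike.congr_fun hχψ⟩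

variable [MeasurableSpace X] {μ : Measure X}

namespace IsMeasurePreservingAction

lemma ae_apply_eq_of_mem_jointEigenspace {G : Type*} [AddCommGroup G] {T : G → X → X}
    (hT : IsMeasurePreservingAction μ T) {χ : G → ℂ} {v : Lp ℂ 2 μ}
    (hv : v ∈ jointEigenspace hT.koopman χ) (j : G) : ∀ᵐ x ∂μ, v (T j x) = χ j * v x := by
  filter_upwards [hT.coeFn_koopman j v, Lp.coeFn_smul (χ j) v] with x hx hsmul
  rw [← Function.comp_apply (f := v), ← hx, mem_jointEigenspace.1 hv j, hsmul, Pi.smul_apply,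
    smul_eq_mul]

lemma isEigenfunction_of_mem_jointEigenspace {d : ℕ} {T : (Fin d → ℤ) → X → X}
    (hT : IsMeasurePreservingAction μ T) {χ : (Fin d → ℤ) → ℂ} {v : Lp ℂ 2 μ}
    (hv : v ∈ jointEigenspace hT.koopman χ) (hv0 : v ≠ 0) : IsEigenfunction μ T v := by
  have hχ (i j : Fin d → ℤ) : χ (i + j) = χ i * χ j := by
    refine smul_left_injective ℂ hv0 ?_
    have h := hT.koopman_add i j v
    simpa only [mem_jointEigenspace.1 hv, map_smul, smul_smul, mul_comm (χ j)] using h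
  obtain ⟨w, hw⟩ := exists_eq_exp_of_map_add hχ (norm_eq_one_of_mem_jointEigenspace hv0 hv)
  refine ⟨hv0, w, fun j => ?_⟩
  rw [← hw]
  exact hT.ae_apply_eq_of_mem_jointEigenspace hv j

end IsMeasurePreservingAction

namespace IsErgodicAction

variable [IsProbabilityMeasure μ]

section

variable {G : Type*} [AddCommGroup G] [Countable G]
  {T : G → X → X} (hT : IsErgodicAction μ T) {χ : G → ℂ} {v : Lp ℂ 2 μ}
  (hv : v ∈ jointEigenspace hT.koopman χ) (hv0 : v ≠ 0)
include hv hv0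

lemma ae_ne_zero_of_mem_jointEigenspace : ∀ᵐ x ∂μ, v x ≠ 0 := by
  obtain ⟨r, hr⟩ := hT.ae_eq_const (Lp.aestronglyMeasurable v).norm fun j => by
    filter_upwards [hT.ae_apply_eq_of_mem_jointEigenspace hv j] with x hx
    rw [Function.comp_apply, hx, norm_mul, norm_eq_one_of_mem_jointEigenspace hv0 hv, one_mul]
  have hr0 : r ≠ 0 := fun h0 => hv0 <| (Lp.eq_zero_iff_ae_eq_zero).2 <| by
    filter_upwards [hr] with x hx
    exact norm_eq_zero.1 (hx.trans h0)
  filter_upwards [hr] with x hx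
  exact norm_ne_zero_iff.1 (hx.trans_ne hr0)

lemma jointEigenspace_koopman_le_span_singleton :
    jointEigenspace hT.koopman χ ≤ Submodule.span ℂ {v} := fun w hw => by
  obtain ⟨c, hc⟩ := hT.ae_eq_const ((Lp.aestronglyMeasurable w).aemeasurable.div
    (Lp.aestronglyMeasurable v).aemeasurable).aestronglyMeasurable fun j => by
      filter_upwards [hT.ae_apply_eq_of_mem_jointEigenspace hv j,
        hT.ae_apply_eq_of_mem_jointEigenspace hw j] with x hvx hwx
      have hχ : χ j ≠ 0 := norm_ne_zero_iff.1
        ((norm_eq_one_of_mem_jointEigenspace hv0 hv j).trans_ne one_ne_zero)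
      rw [Function.comp_apply, Pi.div_apply, Pi.div_apply, hvx, hwx, mul_div_mul_left _ _ hχ]
  refine Submodule.mem_span_singleton.2 ⟨c, Lp.ext ?_⟩
  filter_upwards [hc, hT.ae_ne_zero_of_mem_jointEigenspace hv hv0, Lp.coeFn_smul c v]
    with x hx hvx hsmul
  rw [hsmul, Pi.smul_apply, smul_eq_mul, ← hx, Pi.div_apply, div_mul_cancel₀ _ hvx]

end

theorem hasDiscreteSpectrum_of_eigenvectorSpan_eq_top {d : ℕ} {T : (Fin d → ℤ) → X → X}
    (hT : IsErgodicAction μ T) (htop : eigenvectorSpan hT.koopman = ⊤) :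
    HasDiscreteSpectrum μ T := by
  obtain ⟨b, hb⟩ := exists_hilbertBasis_of_eigenvectorSpan_eq_top htop fun χ v hv hv0 =>
    hT.jointEigenspace_koopman_le_span_singleton hv hv0
  exact ⟨_, b, fun χ => hT.isEigenfunction_of_mem_jointEigenspace (hb χ)
    (b.orthonormal.ne_zero χ)⟩

end IsErgodicAction

end DiscreteSpectrum

section MaximalInequality

variable {d : ℕ}

theorem exists_pairwiseDisjoint_translatedBox_card_le (B : Finset (Fin d → ℤ))
    (r : (Fin d → ℤ) → ℕ) (hr : ∀ a ∈ B, (translatedBox a (r a)).Nonempty) :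
    ∃ U ⊆ B, (U : Set (Fin d → ℤ)).PairwiseDisjoint (fun a => translatedBox a (r a)) ∧
      #B ≤ 3 ^ d * ∑ b ∈ U, #(Fbox d (r b)) := by
  obtain ⟨u, huB, hdisj, hcov⟩ := Vitali.exists_disjoint_subfamily_covering_enlargement
    (fun a => (translatedBox a (r a) : Set (Fin d → ℤ))) B (fun a => (r a : ℝ)) 2 one_lt_two
    (fun _ _ => Nat.cast_nonneg _) (B.sup r : ℕ) (fun a ha => Nat.cast_le.2 (le_sup ha)) hr
  obtain ⟨U, rfl⟩ := (B.finite_toSet.subset huB).exists_finset_coe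
  refine ⟨U, coe_subset.1 huB, fun a ha b hb hab => disjoint_coe.1 (hdisj ha hb hab), ?_⟩
  have hB : B ⊆ U.biUnion fun b => translatedBox (fun k => b k - 2 * r b) (3 * r b) := by
    intro a ha
    obtain ⟨b, hb, ⟨i, hia, hib⟩, hab⟩ := hcov a ha
    refine mem_biUnion.2 ⟨b, hb, mem_translatedBox.2 fun k => ?_⟩
    have hik := mem_translatedBox.1 hia k
    have hik' := mem_translatedBox.1 hib k
    have hr2 : r a ≤ 2 * r b := by exact_mod_cast hab
    push_cast
    omega
  calc #B ≤ ∑ b ∈ U, #(translatedBox (fun k => b k - 2 * r b) (3 * r b)) :=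
        (card_le_card hB).trans card_biUnion_le
    _ = 3 ^ d * ∑ b ∈ U, #(Fbox d (r b)) := by
        simp only [card_translatedBox, card_Fbox, mul_pow, mul_sum]

theorem mul_card_le_sum_of_lt_boxAverage {φ : (Fin d → ℤ) → ℝ} (hφ : ∀ i, 0 ≤ φ i) {l : ℝ}
    (hl : 0 ≤ l) {K M : ℕ} {B : Finset (Fin d → ℤ)} (hBK : B ⊆ Fbox d K)
    (hB : ∀ a ∈ B, ∃ n ≤ M, l < boxAverage d n (fun j => φ (j + a))) :
    l * #B ≤ 3 ^ d * ∑ i ∈ Fbox d (K + M), φ i := by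
  choose! r hrM hr using hB
  have hcard_pos (a) (ha : a ∈ B) : 0 < #(Fbox d (r a)) := by
    by_contra! hcard
    have hlt := hr a ha
    rw [boxAverage_eq_div, Nat.le_zero.1 hcard, Nat.cast_zero, div_zero] at hlt
    exact hlt.not_ge hl
  obtain ⟨U, hUB, hdisj, hcard⟩ := exists_pairwiseDisjoint_translatedBox_card_le B r
    fun a ha => card_pos.1 ((card_translatedBox a _).symm ▸ hcard_pos a ha)
  have hsub : U.biUnion (fun a => translatedBox a (r a)) ⊆ Fbox d (K + M) := fun i hi =>
    mem_Fbox.2 fun k => by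
      obtain ⟨a, ha, hia⟩ := mem_biUnion.1 hi
      have := mem_translatedBox.1 hia k
      have := mem_Fbox.1 (hBK (hUB ha)) k
      have := hrM a (hUB ha)
      push_cast
      omega
  calc l * #B ≤ l * (3 ^ d * ∑ a ∈ U, #(Fbox d (r a)) : ℕ) := by gcongr
    _ = 3 ^ d * ∑ a ∈ U, l * #(Fbox d (r a)) := by
        push_cast
        rw [mul_left_comm, mul_sum]
    _ ≤ 3 ^ d * ∑ a ∈ U, ∑ i ∈ translatedBox a (r a), φ i := by
        gcongr with a ha
        rw [sum_translatedBox]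
        exact ((lt_div_iff₀ (Nat.cast_pos.2 (hcard_pos a (hUB ha)))).1
          ((hr a (hUB ha)).trans_eq (boxAverage_eq_div _ _))).le
    _ = 3 ^ d * ∑ i ∈ U.biUnion fun a => translatedBox a (r a), φ i := by
        rw [sum_biUnion hdisj]
    _ ≤ 3 ^ d * ∑ i ∈ Fbox d (K + M), φ i := by
        gcongr
        exact fun i _ _ => hφ i

namespace IsMeasurePreservingAction

variable [MeasurableSpace X] {μ : Measure X} [IsFiniteMeasure μ] {T : (Fin d → ℤ) → X → X}
  (hT : IsMeasurePreservingAction μ T) {h : X → ℝ} (hh : Measurable h) (h0 : ∀ x, 0 ≤ h x)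
  (hi : Integrable h μ) {l : ℝ} (hl : 0 ≤ l)
include hT hh h0 hi hl

lemma mul_measureReal_iUnion_le_le_integral (M : ℕ) :
    l * μ.real (⋃ n ≤ M, {x | l < boxAverage d n (fun j => h (T j x))}) ≤
      3 ^ d * ∫ x, h x ∂μ := by
  set E : Set X := ⋃ n ≤ M, {x | l < boxAverage d n (fun j => h (T j x))}
  have hE : MeasurableSet E := .biUnion (Set.to_countable _) fun n _ =>
    measurableSet_lt measurable_const (hT.measurable_boxAverage hh n)
  have hEint : Integrable (E.indicator (1 : X → ℝ)) μ := (integrable_const 1).indicator hE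
  have pointwise {K : ℕ} (hK : K ≠ 0) (x : X) :
      l * boxAverage d K (fun j => E.indicator (1 : X → ℝ) (T j x)) ≤
      3 ^ d * ((#(Fbox d (K + M)) : ℝ) / #(Fbox d K)) *
        boxAverage d (K + M) (fun j => h (T j x)) := by
    have hcount := mul_card_le_sum_of_lt_boxAverage (φ := fun j => h (T j x)) (fun j => h0 _) hl
      (B := {j ∈ Fbox d K | T j x ∈ E}) (filter_subset _ _) fun a ha => by
        simpa [E, hT.apply_apply] using (mem_filter.1 ha).2
    rw [natCast_card_filter] at hcount
    have hcard : (#(Fbox d (K + M)) : ℝ) ≠ 0 := by exact_mod_cast (card_Fbox_pos (by omega)).ne'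
    rw [boxAverage_eq_div, boxAverage_eq_div, mul_assoc, mul_comm (_ / _) (_ / _),
      div_mul_div_cancel₀ hcard, ← mul_div_assoc, ← mul_div_assoc]
    simp only [Set.indicator_apply, Pi.one_apply]
    gcongr
  have integrated (K : ℕ) (hK : K ≠ 0) :
      l * μ.real E ≤ 3 ^ d * ((#(Fbox d (K + M)) : ℝ) / #(Fbox d K)) * ∫ x, h x ∂μ := by
    have hint := integral_mono ((hT.integrable_boxAverage hEint K).const_mul l)
      ((hT.integrable_boxAverage hi (K + M)).const_mul _) (pointwise hK)
    rwa [integral_const_mul, integral_const_mul, hT.integral_boxAverage hEint hK,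
      hT.integral_boxAverage hi (by omega), integral_indicator_one hE] at hint
  have hlim := ((tendsto_card_Fbox_add_div d M).const_mul (3 ^ d)).mul_const (∫ x, h x ∂μ)
  rw [mul_one] at hlim
  refine ge_of_tendsto hlim ?_
  filter_upwards [eventually_ne_atTop 0] with K hK using integrated K hK

theorem mul_measureReal_exists_lt_boxAverage_le :
    l * μ.real {x | ∃ n, l < boxAverage d n (fun j => h (T j x))} ≤ 3 ^ d * ∫ x, h x ∂μ := by
  rw [Set.ofPred_exists]
  refine le_of_tendsto' (((ENNReal.tendsto_toReal (measure_ne_top _ _)).comp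
    (tendsto_measure_iUnion_accumulate)).const_mul l) fun M => ?_
  exact hT.mul_measureReal_iUnion_le_le_integral hh h0 hi hl M

end IsMeasurePreservingAction

end MaximalInequality

section Equicontinuity

variable [MeasurableSpace X] {μ : Measure X}

lemma exists_measurableSet_subset_forall_of_ae {A : Set X} (hA : MeasurableSet A) (hA0 : 0 < μ A)
    {p : X → Prop} (hp : ∀ᵐ x ∂μ, p x) :
    ∃ B ⊆ A, MeasurableSet B ∧ 0 < μ B ∧ ∀ x ∈ B, p x := by
  have hnull : μ (toMeasurable μ {x | ¬p x}) = 0 := (measure_toMeasurable _).trans (ae_iff.1 hp)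
  refine ⟨A \ toMeasurable μ {x | ¬p x}, Set.sdiff_subset,
    hA.diff (measurableSet_toMeasurable _ _), by rwa [measure_sdiff_null hnull], fun x hx => ?_⟩
  exact not_not.1 fun hpx => hx.2 (subset_toMeasurable _ _ hpx)

lemma exists_measurableSet_subset_dist_le {E : Type*} [PseudoMetricSpace E]
    [SecondCountableTopology E] [MeasurableSpace E] [OpensMeasurableSpace E] {f : X → E}
    (hf : Measurable f) {A : Set X} (hA : MeasurableSet A) (hA0 : 0 < μ A) {δ : ℝ} (hδ : 0 < δ) :
    ∃ B ⊆ A, MeasurableSet B ∧ 0 < μ B ∧ ∀ x ∈ B, ∀ y ∈ B, dist (f x) (f y) ≤ δ := by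
  have hmap : (μ.restrict A).map f Set.univ ≠ 0 := by
    rw [Measure.map_apply hf .univ, Set.preimage_univ, Measure.restrict_apply_univ]
    exact hA0.ne'
  obtain ⟨c, -, hc⟩ := exists_mem_forall_mem_nhdsWithin_pos_measure hmap
  have hball := hc (ball c (δ / 2)) (mem_nhdsWithin_of_mem_nhds (ball_mem_nhds c (half_pos hδ)))
  rw [Measure.map_apply hf measurableSet_ball,
    Measure.restrict_apply (hf measurableSet_ball)] at hball
  refine ⟨_, Set.inter_subset_right, (hf measurableSet_ball).inter hA, hball, fun x hx y hy => ?_⟩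
  exact (dist_triangle_right _ _ c).trans
    ((add_le_add (mem_ball.1 hx.1).le (mem_ball.1 hy.1).le).trans_eq (add_halves δ))

section Action

variable {G : Type*} {T : G → X → X}

/-- A measure-theoretic form of equicontinuity of `{f ∘ T j}`: inside every set of positive measure
there is a smaller one whose points have `δ`-close `f`-orbits. Orbits are compared uniformly in
time, not only in the mean. -/
def IsMeasureEquicontinuous (μ : Measure X) (T : G → X → X) (f : X → ℂ) : Prop :=
  ∀ A, MeasurableSet A → 0 < μ A → ∀ δ > 0, ∃ B ⊆ A, MeasurableSet B ∧ 0 < μ B ∧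
    ∀ x ∈ B, ∀ y ∈ B, ∀ j, ‖f (T j x) - f (T j y)‖ ≤ δ

namespace IsMeasureEquicontinuous

variable {f g : X → ℂ}

lemma zero : IsMeasureEquicontinuous μ T 0 := fun A hA hA0 δ hδ =>
  ⟨A, subset_rfl, hA, hA0, fun x _ y _ j => by simpa using hδ.le⟩

lemma add (hf : IsMeasureEquicontinuous μ T f) (hg : IsMeasureEquicontinuous μ T g) :
    IsMeasureEquicontinuous μ T (f + g) := fun A hA hA0 δ hδ => by
  obtain ⟨B, hBA, hB, hB0, hfB⟩ := hf A hA hA0 (δ / 2) (half_pos hδ)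
  obtain ⟨C, hCB, hC, hC0, hgC⟩ := hg B hB hB0 (δ / 2) (half_pos hδ)
  refine ⟨C, hCB.trans hBA, hC, hC0, fun x hx y hy j => ?_⟩
  rw [Pi.add_apply, Pi.add_apply, add_sub_add_comm]
  exact (norm_add_le _ _).trans
    ((add_le_add (hfB x (hCB hx) y (hCB hy) j) (hgC x hx y hy j)).trans_eq (add_halves δ))

lemma const_smul (hf : IsMeasureEquicontinuous μ T f) (c : ℂ) :
    IsMeasureEquicontinuous μ T (c • f) := fun A hA hA0 δ hδ => by
  obtain ⟨B, hBA, hB, hB0, hfB⟩ := hf A hA hA0 (δ / (‖c‖ + 1)) (by positivity)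
  refine ⟨B, hBA, hB, hB0, fun x hx y hy j => ?_⟩
  calc ‖(c • f) (T j x) - (c • f) (T j y)‖ = ‖c‖ * ‖f (T j x) - f (T j y)‖ := by
        rw [Pi.smul_apply, Pi.smul_apply, ← smul_sub, norm_smul]
    _ ≤ (‖c‖ + 1) * (δ / (‖c‖ + 1)) := by
        gcongr
        · exact le_add_of_nonneg_right zero_le_one
        · exact hfB x hx y hy j
    _ = δ := mul_div_cancel₀ _ (by positivity)

variable [Countable G]

lemma of_comp_ae_eq_mul {χ : G → ℂ} (hχ : ∀ j, ‖χ j‖ ≤ 1) (hf : Measurable f)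
    (hfχ : ∀ j, f ∘ T j =ᵐ[μ] fun x => χ j * f x) :
    IsMeasureEquicontinuous μ T f := fun A hA hA0 δ hδ => by
  obtain ⟨B, hBA, hB, hB0, hfB⟩ := exists_measurableSet_subset_dist_le hf hA hA0 hδ
  obtain ⟨C, hCB, hC, hC0, hfC⟩ := exists_measurableSet_subset_forall_of_ae hB hB0
    (ae_all_iff.2 hfχ)
  refine ⟨C, hCB.trans hBA, hC, hC0, fun x hx y hy j => ?_⟩
  have hfx : f (T j x) = χ j * f x := hfC x hx j
  have hfy : f (T j y) = χ j * f y := hfC y hy j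
  calc ‖f (T j x) - f (T j y)‖ = ‖χ j‖ * dist (f x) (f y) := by
        rw [hfx, hfy, ← mul_sub, norm_mul, dist_eq_norm]
    _ ≤ 1 * δ := by
        gcongr
        · exact hχ j
        · exact hfB x (hCB hx) y (hCB hy)
    _ = δ := one_mul δ

variable [AddCommGroup G]

lemma congr_ae (hT : IsMeasurePreservingAction μ T) (hf : IsMeasureEquicontinuous μ T f)
    (hfg : f =ᵐ[μ] g) : IsMeasureEquicontinuous μ T g := fun A hA hA0 δ hδ => by
  have orbit_eq : ∀ᵐ x ∂μ, ∀ j, f (T j x) = g (T j x) :=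
    ae_all_iff.2 fun j => (hT.measurePreserving j).quasiMeasurePreserving.ae hfg
  obtain ⟨B, hBA, hB, hB0, hfB⟩ := hf A hA hA0 δ hδ
  obtain ⟨C, hCB, hC, hC0, hfgC⟩ := exists_measurableSet_subset_forall_of_ae hB hB0 orbit_eq
  refine ⟨C, hCB.trans hBA, hC, hC0, fun x hx y hy j => ?_⟩
  rw [← hfgC x hx, ← hfgC y hy]
  exact hfB x (hCB hx) y (hCB hy) j

lemma of_mem_span (hT : IsMeasurePreservingAction μ T) {s : Set (Lp ℂ 2 μ)}
    (hs : ∀ g ∈ s, IsMeasureEquicontinuous μ T g) {g : Lp ℂ 2 μ} (hg : g ∈ Submodule.span ℂ s) :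
    IsMeasureEquicontinuous μ T g := by
  induction hg using Submodule.span_induction with
  | mem g hg => exact hs g hg
  | zero => exact zero.congr_ae hT (Lp.coeFn_zero ℂ 2 μ).symm
  | add g g' _ _ hg hg' => exact (hg.add hg').congr_ae hT (Lp.coeFn_add g g').symm
  | smul c g _ hg => exact (hg.const_smul c).congr_ae hT (Lp.coeFn_smul c g).symm

end IsMeasureEquicontinuous

end Action

variable {d : ℕ} {T : (Fin d → ℤ) → X → X}

lemma IsEigenfunction.isMeasureEquicontinuous {g : Lp ℂ 2 μ} (hg : IsEigenfunction μ T g) :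
    IsMeasureEquicontinuous μ T g := by
  obtain ⟨-, w, hw⟩ := hg
  refine .of_comp_ae_eq_mul (fun j => ?_) (Lp.stronglyMeasurable g).measurable hw
  have hexp : 2 * Real.pi * Complex.I * ∑ k, (w k : ℂ) * (j k : ℂ) =
      (2 * Real.pi * ∑ k, w k * j k : ℝ) * Complex.I := by
    push_cast
    ring
  rw [hexp, Complex.norm_exp_ofReal_mul_I]

variable [IsProbabilityMeasure μ]

lemma IsMeasurePreservingAction.exists_measurableSet_forall_boxAverage_le
    (hT : IsMeasurePreservingAction μ T) {h : X → ℝ} (hh : Measurable h) (h0 : ∀ x, 0 ≤ h x)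
    (hi : Integrable h μ) {l : ℝ} (hl : 3 ^ d * ∫ x, h x ∂μ < l) :
    ∃ A, MeasurableSet A ∧ 0 < μ A ∧ ∀ x ∈ A, ∀ n, boxAverage d n (fun j => h (T j x)) ≤ l := by
  have hl0 : 0 < l := lt_of_le_of_lt (mul_nonneg (by positivity) (integral_nonneg h0)) hl
  set E : Set X := {x | ∃ n, l < boxAverage d n (fun j => h (T j x))} with hE_def
  have hE : MeasurableSet E := by
    rw [hE_def, Set.ofPred_exists]
    exact .iUnion fun n => measurableSet_lt measurable_const (hT.measurable_boxAverage hh n)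
  have hE1 : μ.real E < 1 := lt_of_mul_lt_mul_left
    ((hT.mul_measureReal_exists_lt_boxAverage_le hh h0 hi hl0.le).trans_lt
      (hl.trans_eq (mul_one l).symm)) hl0.le
  refine ⟨Eᶜ, hE.compl, ?_, fun x hx n => not_lt.1 fun hn => hx ⟨n, hn⟩⟩
  have : 0 < μ.real Eᶜ := by rw [probReal_compl_eq_one_sub hE]; exact sub_pos.2 hE1
  exact (ENNReal.toReal_pos_iff.1 this).1

theorem IsMeasurePreservingAction.not_meanSensitiveFun_of_mem_closure
    (hT : IsMeasurePreservingAction μ T) {f : X → ℂ} (hf : MemLp f 2 μ)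
    (hclosure : hf.toLp f ∈ closure {g : Lp ℂ 2 μ | IsMeasureEquicontinuous μ T g}) :
    ¬MeanSensitiveFun μ T f := by
  rintro ⟨ε, hε, hsens⟩
  set l : ℝ := ε ^ 2 / 12
  obtain ⟨g, hg, hgf⟩ : ∃ g : Lp ℂ 2 μ, IsMeasureEquicontinuous μ T g ∧
      3 ^ d * ‖hf.toLp f - g‖ ^ 2 < l := by
    have hnear : ∀ᶠ g in nhds (hf.toLp f), 3 ^ d * ‖hf.toLp f - g‖ ^ 2 < l :=
      ContinuousAt.eventually_lt (by fun_prop) continuousAt_const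
        (by simpa [l] using pow_pos hε 2)
    exact ((mem_closure_iff_frequently.1 hclosure).and_eventually hnear).exists
  set H : Lp ℂ 2 μ := hf.toLp f - g
  have hH : ∀ᵐ x ∂μ, H x = f x - g x := by
    filter_upwards [Lp.coeFn_sub (hf.toLp f) g, hf.coeFn_toLp] with x hx hfx
    rw [hx, Pi.sub_apply, hfx]
  have orbit_eq : ∀ᵐ x ∂μ, ∀ j, H (T j x) = f (T j x) - g (T j x) :=
    ae_all_iff.2 fun j => (hT.measurePreserving j).quasiMeasurePreserving.ae hH
  rw [← Lp.toLp_coeFn H (Lp.memLp H), norm_toLp_sq] at hgf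
  obtain ⟨A, hA, hA0, hle⟩ := hT.exists_measurableSet_forall_boxAverage_le
    ((Lp.stronglyMeasurable H).measurable.norm.pow_const 2) (fun x => sq_nonneg ‖H x‖)
    ((Lp.memLp H).integrable_norm_pow two_ne_zero) hgf
  obtain ⟨B, hBA, hB, hB0, hHB⟩ := exists_measurableSet_subset_forall_of_ae hA hA0 orbit_eq
  obtain ⟨C, hCB, hC, hC0, hgC⟩ := hg B hB hB0 (ε / 4) (by positivity)
  obtain ⟨x, hx, y, hy, -, -, hxy⟩ := hsens C hC hC0
  have average_le (z : X) (hz : z ∈ C) (n : ℕ) :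
      boxAverage d n (fun j => ‖f (T j z) - g (T j z)‖ ^ 2) ≤ l := by
    simpa only [hHB z (hCB hz)] using hle z (hBA (hCB hz)) n
  refine hxy.not_ge ((dF_le_sqrt_of_boxAverage_le (average_le x hx) (average_le y hy)
    (hgC x hx y hy)).trans (Real.sqrt_le_iff.2 ⟨hε.le, ?_⟩))
  simp only [l]
  nlinarith [sq_nonneg ε]

theorem HasDiscreteSpectrum.not_meanSensitiveFun (hT : IsMeasurePreservingAction μ T)
    (hdiscrete : HasDiscreteSpectrum μ T) {f : X → ℂ} (hf : MemLp f 2 μ) :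
    ¬MeanSensitiveFun μ T f := by
  obtain ⟨ι, b, hb⟩ := hdiscrete
  refine hT.not_meanSensitiveFun_of_mem_closure hf (closure_mono (fun g hg => ?_)
    (b.dense_span.ge Submodule.mem_top))
  exact IsMeasureEquicontinuous.of_mem_span hT
    (Set.forall_mem_range.2 fun i => (hb i).isMeasureEquicontinuous) hg

end Equicontinuity

/-- an ergodic MPS has discrete spectrum iff no `f ∈ L²(X,μ)` is
`μ`-mean sensitive. -/
theorem stmt2 {d : ℕ}
    [MeasurableSpace X] (μ : Measure X) [IsProbabilityMeasure μ]
    (T : (Fin d → ℤ) → X → X)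
    (hT : ∀ j, MeasurePreserving (T j) μ μ)
    (hTadd : ∀ i j, T (i + j) = T i ∘ T j)
    (herg : ∀ A : Set X, MeasurableSet A → (∀ j, T j ⁻¹' A = A) → μ A = 0 ∨ μ A = 1) :
    HasDiscreteSpectrum μ T ↔ ∀ f : X → ℂ, MemLp f 2 μ → ¬ MeanSensitiveFun μ T f := by
  have hErgodic : IsErgodicAction μ T := ⟨⟨hT, hTadd⟩, herg⟩
  constructor
  · intro hdiscrete f hf
    exact hdiscrete.not_meanSensitiveFun hErgodic.toIsMeasurePreservingAction hf
  · intro hsens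
    exact hErgodic.hasDiscreteSpectrum_of_eigenvectorSpan_eq_top
      (hErgodic.eigenvectorSpan_koopman_eq_top hsens)
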